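/- arXiv:1804.00677 — 2 statements merged into one kernel-verified Lean document; each statement's English description precedes it below -/
import Mathlib

section
/- Let F=(φ,f,η): Γ → Γ' be a crossed intertwiner between crossed modules such that φ and f are group isomorphisms. Define η⁻¹: G' × G' → H by η⁻¹(g,g') := f⁻¹(η(φ⁻¹(g), φ⁻¹(g')))⁻¹. Then (φ⁻¹, f⁻¹, η⁻¹) is a crossed intertwiner Γ' → Γ (in particular η⁻¹ takes values in ker t), and under the composition formula for crossed intertwiners both composites of (φ,f,η) and (φ⁻¹,f⁻¹,η⁻¹) equal the identity crossed intertwiner (id, id, 1). -/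
/-- A crossed module of groups `(G, H, t, α)`. -/
structure CrossedModule (G H : Type*) [Group G] [Group H] where
  t : H →* G
  α : G → H → H
  α_mul : ∀ (g : G) (h h' : H), α g (h * h') = α g h * α g h'
  α_one : ∀ h : H, α 1 h = h
  α_comp : ∀ (g g' : G) (h : H), α (g * g') h = α g (α g' h)
  peiffer₁ : ∀ h h' : H, α (t h) h' = h * h' * h⁻¹
  peiffer₂ : ∀ (g : G) (h : H), t (α g h) = g * t h * g⁻¹

/-- A crossed intertwiner `(φ, f, η)` between crossed modules; `η` takes values in `ker t'`. -/
structure CrossedIntertwiner {G H G' H' : Type*} [Group G] [Group H] [Group G'] [Group H']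
    (Γ : CrossedModule G H) (Γ' : CrossedModule G' H') where
  φ : G →* G'
  f : H →* H'
  η : G → G → H'
  η_mem_ker : ∀ g g' : G, Γ'.t (η g g') = 1
  CI1 : ∀ h : H, φ (Γ.t h) = Γ'.t (f h)
  CI2 : ∀ h h' : H, η (Γ.t h) (Γ.t h') = 1
  CI4 : ∀ (g : G) (h : H),
    η g (Γ.t h * g⁻¹) * f (Γ.α g h) =
      Γ'.α (φ g) (η (Γ.t h * g⁻¹) g) * Γ'.α (φ g) (f h)
  CI5 : ∀ g g' g'' : G,
    η g g' * η (g * g') g'' = Γ'.α (φ g) (η g' g'') * η g (g' * g'')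

/-!
Since `t'` kills the values of `η`, these are central in `H'` by the Peiffer identity. Hence (CI4)
and (CI5) may be rearranged into the corresponding identities for `η⁻¹`, with the two sides of (CI4)
exchanging `f (α g h)` and `α' (φ g) (f h)`. To transport them along `f⁻¹`, one needs `f` to be
equivariant on `ker t`. This is (CI4) for `h ∈ ker t`, divided by its instance `h = 1`.
-/

namespace CrossedModule

variable {G H : Type*} [Group G] [Group H] (Γ : CrossedModule G H)

theorem α_map_one (g : G) : Γ.α g 1 = 1 :=
  map_one (MonoidHom.mk' (Γ.α g) (Γ.α_mul g))

theorem α_map_inv (g : G) (h : H) : Γ.α g h⁻¹ = (Γ.α g h)⁻¹ :=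
  map_inv (MonoidHom.mk' (Γ.α g) (Γ.α_mul g)) h

variable {Γ} in
theorem commute_of_t_eq_one {u : H} (hu : Γ.t u = 1) (h : H) : Commute u h := by
  have conj_eq : h = u * h * u⁻¹ := by rw [← Γ.peiffer₁, hu, Γ.α_one]
  exact (eq_mul_inv_iff_mul_eq.mp conj_eq).symm

end CrossedModule

namespace CrossedIntertwiner

variable {G H G' H' : Type*} [Group G] [Group H] [Group G'] [Group H']
  {Γ : CrossedModule G H} {Γ' : CrossedModule G' H'} (F : CrossedIntertwiner Γ Γ')

theorem η_commute (g g' : G) (h' : H') : Commute (F.η g g') h' :=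
  CrossedModule.commute_of_t_eq_one (F.η_mem_ker g g') h'

theorem η_self_inv (g : G) : F.η g g⁻¹ = Γ'.α (F.φ g) (F.η g⁻¹ g) := by
  simpa only [map_one, one_mul, mul_one, CrossedModule.α_map_one] using F.CI4 g 1

theorem f_α_of_t_eq_one {u : H} (hu : Γ.t u = 1) (g : G) :
    F.f (Γ.α g u) = Γ'.α (F.φ g) (F.f u) := by
  have CI4_u := F.CI4 g u
  rw [hu, one_mul, ← η_self_inv] at CI4_u
  exact mul_left_cancel CI4_u

theorem inv_η_mul_α (g : G) (h : H) :
    (F.η g (Γ.t h * g⁻¹))⁻¹ * Γ'.α (F.φ g) (F.f h) =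
      (Γ'.α (F.φ g) (F.η (Γ.t h * g⁻¹) g))⁻¹ * F.f (Γ.α g h) := by
  rw [inv_mul_eq_iff_eq_mul, (F.η_commute _ _ _).left_comm, F.CI4, inv_mul_cancel_left]

theorem inv_η_mul_inv_η (g g' g'' : G) :
    (F.η g g')⁻¹ * (F.η (g * g') g'')⁻¹ =
      (Γ'.α (F.φ g) (F.η g' g''))⁻¹ * (F.η g (g' * g''))⁻¹ := by
  rw [← mul_inv_rev, ← mul_inv_rev, ← (F.η_commute g g' _).eq, F.CI5,
    (F.η_commute g (g' * g'') _).eq]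

section Symm

variable (e : G ≃* G') (e' : H ≃* H') (hφ : ∀ g, F.φ g = e g) (hf : ∀ h, F.f h = e' h)
include hφ hf

theorem symm_t (h' : H') : e.symm (Γ'.t h') = Γ.t (e'.symm h') := by
  rw [MulEquiv.symm_apply_eq, ← hφ, F.CI1, hf, e'.apply_symm_apply]

theorem t_symm_η (g g' : G) : Γ.t (e'.symm (F.η g g')) = 1 := by
  rw [← F.symm_t e e' hφ hf, F.η_mem_ker, map_one]

theorem apply_α_inv_symm_η (g g' g'' : G) :
    e' (Γ.α g (e'.symm (F.η g' g''))⁻¹) = (Γ'.α (e g) (F.η g' g''))⁻¹ := by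
  rw [Γ.α_map_inv, map_inv, ← hf, F.f_α_of_t_eq_one (F.t_symm_η e e' hφ hf g' g''), hφ, hf,
    e'.apply_symm_apply]

/-- The inverse crossed intertwiner `(φ⁻¹, f⁻¹, η⁻¹)`. The isomorphisms `e` and `e'` are passed
separately, so that the inverses of `φ` and `f` are given rather than chosen. -/
def symm : CrossedIntertwiner Γ' Γ where
  φ := e.symm
  f := e'.symm
  η g g' := (e'.symm (F.η (e.symm g) (e.symm g')))⁻¹
  η_mem_ker g g' := by rw [map_inv, F.t_symm_η e e' hφ hf, inv_one]
  CI1 := F.symm_t e e' hφ hf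
  CI2 h h' := by
    rw [F.symm_t e e' hφ hf, F.symm_t e e' hφ hf, F.CI2, map_one, inv_one]
  CI4 g h := by
    obtain ⟨x, rfl⟩ := e.surjective g
    obtain ⟨y, rfl⟩ := e'.surjective h
    apply e'.injective
    simpa only [MonoidHom.coe_coe, map_mul, map_inv, F.symm_t e e' hφ hf, e.symm_apply_apply,
      e'.symm_apply_apply, e'.apply_symm_apply, F.apply_α_inv_symm_η e e' hφ hf, hφ, hf]
      using F.inv_η_mul_α x y
  CI5 g g' g'' := by
    obtain ⟨x, rfl⟩ := e.surjective g
    obtain ⟨y, rfl⟩ := e.surjective g'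
    obtain ⟨z, rfl⟩ := e.surjective g''
    apply e'.injective
    simpa only [MonoidHom.coe_coe, map_mul, map_inv, e.symm_apply_apply,
      e'.apply_symm_apply, F.apply_α_inv_symm_η e e' hφ hf, hφ] using F.inv_η_mul_inv_η x y z

theorem η_mul_f_symm_η (g g' : G') :
    F.η (e.symm g) (e.symm g') * F.f ((F.symm e e' hφ hf).η g g') = 1 := by
  simp only [symm, hf, map_inv, e'.apply_symm_apply, mul_inv_cancel]

theorem symm_η_mul_symm_f_η (g g' : G) :
    (F.symm e e' hφ hf).η (F.φ g) (F.φ g') * e'.symm (F.η g g') = 1 := by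
  simp only [symm, hφ, e.symm_apply_apply, inv_mul_cancel]

end Symm

end CrossedIntertwiner

/-- if the components `φ` and `f` of a crossed intertwiner are group
isomorphisms (given by `e : G ≃* G'` and `e' : H ≃* H'`), then
`(φ⁻¹, f⁻¹, (g,g') ↦ f⁻¹(η(φ⁻¹ g, φ⁻¹ g'))⁻¹)` is a crossed intertwiner in the
other direction (in particular its `η⁻¹` takes values in `ker t`), and both
composites — computed with the composition formula for crossed intertwiners —
equal the identity crossed intertwiner `(id, id, 1)`. -/
theorem crossed_intertwiner_inverse
    {G H G' H' : Type*} [Group G] [Group H] [Group G'] [Group H']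
    {Γ : CrossedModule G H} {Γ' : CrossedModule G' H'}
    (F : CrossedIntertwiner Γ Γ') (e : G ≃* G') (e' : H ≃* H')
    (hφ : ∀ g : G, F.φ g = e g) (hf : ∀ h : H, F.f h = e' h) :
    ∃ Finv : CrossedIntertwiner Γ' Γ,
      (∀ g' : G', Finv.φ g' = e.symm g') ∧
      (∀ h' : H', Finv.f h' = e'.symm h') ∧
      (∀ g g' : G', Finv.η g g' = (e'.symm (F.η (e.symm g) (e.symm g')))⁻¹) ∧
      -- the composite `F ∘ Finv` is the identity crossed intertwiner of `Γ'`: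
      (∀ g' : G', F.φ (Finv.φ g') = g') ∧
      (∀ h' : H', F.f (Finv.f h') = h') ∧
      (∀ g g' : G', F.η (Finv.φ g) (Finv.φ g') * F.f (Finv.η g g') = 1) ∧
      -- the composite `Finv ∘ F` is the identity crossed intertwiner of `Γ`:
      (∀ g : G, Finv.φ (F.φ g) = g) ∧
      (∀ h : H, Finv.f (F.f h) = h) ∧
      (∀ g g' : G, Finv.η (F.φ g) (F.φ g') * Finv.f (F.η g g') = 1) := by
  exact ⟨F.symm e e' hφ hf, fun _ ↦ rfl, fun _ ↦ rfl, fun _ _ ↦ rfl,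
    fun g' ↦ (hφ _).trans (e.apply_symm_apply g'),
    fun h' ↦ (hf _).trans (e'.apply_symm_apply h'),
    F.η_mul_f_symm_η e e' hφ hf,
    fun g ↦ e.symm_apply_eq.mpr (hφ g),
    fun h ↦ e'.symm_apply_eq.mpr (hf h),
    F.symm_η_mul_symm_f_η e e' hφ hf⟩
end

section
/- For B ∈ 𝔰𝔬(n,ℤ) define f_B(τ, m) := (c ↦ τ(c) − ⟨m|B|c⟩, m) and η_B(a,a') := (the constant map 𝕋ⁿ → 𝕋 with value ⌊a'|B|a⌋ mod ℤ, 0). Then for every map τ: 𝕋ⁿ → 𝕋 (in particular every smooth map), all m, m' ∈ ℤⁿ, a, a', a'' ∈ ℝⁿ and every c ∈ 𝕋ⁿ, the crossed intertwiner axioms for F_B = (id_{ℝⁿ}, f_B, η_B): TBFFR[n] → TBFFR[n] hold pointwise: (CI2) ⌊m'|B|m⌋ ≡ 0 mod ℤ; (CI4) η_B(a, m−a) + f_B(α(a,(τ,m))) = η_B(m−a, a) + α(a, f_B(τ,m)) evaluated at c; (CI5) η_B(a,a') + η_B(a+a', a'') = η_B(a',a'') + η_B(a, a'+a''). Moreover,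 for B₁, B₂ ∈ 𝔰𝔬(n,ℤ): f_{B₂}(f_{B₁}(τ,m)) = f_{B₁+B₂}(τ,m) and η_{B₂} + η_{B₁} = η_{B₁+B₂}, so F_{B₂} ∘ F_{B₁} = F_{B₁+B₂} and B ↦ F_B is an action of 𝔰𝔬(n,ℤ) on TBFFR[n] by crossed intertwiners. -/
open Matrix

noncomputable section

/-- The additive circle `𝕋 := ℝ/ℤ`. -/
abbrev Torus : Type := AddCircle (1 : ℝ)

/-- Elements of `H` of `TBFFR[n]`: pairs of a map `τ : 𝕋ⁿ → 𝕋` and `m ∈ ℤⁿ`. -/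
abbrev TBH (n : ℕ) : Type := ((Fin n → Torus) → Torus) × (Fin n → ℤ)

/-- `t(τ, m) := m ∈ ℝⁿ`. -/
def TBt {n : ℕ} (h : TBH n) : Fin n → ℝ := fun i => (h.2 i : ℝ)

/-- Action of `ℝⁿ` on `H`: `α(g,(τ,m)) := (c ↦ τ(c − g), m)`, with `g` acting
on `𝕋ⁿ` via the projection `ℝⁿ → 𝕋ⁿ`. -/
def TBα {n : ℕ} (g : Fin n → ℝ) (h : TBH n) : TBH n :=
  (fun c => h.1 (c - fun i => ((g i : ℝ) : Torus)), h.2)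

/-- `⌊v|B|w⌋ := Σ_{i>j} B_{ij} vᵢ wⱼ`. -/
def lbrak {n : ℕ} (B : Matrix (Fin n) (Fin n) ℤ) (v w : Fin n → ℝ) : ℝ :=
  ∑ i, ∑ j, if j < i then (B i j : ℝ) * v i * w j else 0

/-- The well-defined map `⟨m|B|·⟩ : 𝕋ⁿ → 𝕋`, `c ↦ Σ_{i,j} B_{ij} mᵢ cⱼ`. -/
def braB {n : ℕ} (B : Matrix (Fin n) (Fin n) ℤ) (m : Fin n → ℤ) (c : Fin n → Torus) : Torus :=
  ∑ i, ∑ j, (B i j * m i) • c j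

/-- `f_B(τ, m) := (c ↦ τ(c) − ⟨m|B|c⟩, m)`. -/
def fB {n : ℕ} (B : Matrix (Fin n) (Fin n) ℤ) (h : TBH n) : TBH n :=
  (fun c => h.1 c - braB B h.2 c, h.2)

/-- `η_B(a,a') := (the constant map with value ⌊a'|B|a⌋ mod ℤ, 0)`. -/
def ηB {n : ℕ} (B : Matrix (Fin n) (Fin n) ℤ) (a a' : Fin n → ℝ) : TBH n :=
  (fun _ => ((lbrak B a' a : ℝ) : Torus), 0)

/-!
Let `L` be the strictly lower triangular part of `B`, so that `⌊v|B|w⌋ = v ⬝ᵥ L *ᵥ w`. This is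
biadditive in `(v, w)` and additive in `B`, whence (CI5) and the compatibility of `η` with sums, and
it is integral on `ℤⁿ × ℤⁿ`, whence (CI2). For (CI4), `f_B` fails to be `ℝⁿ`-equivariant at
`(τ, m)` by the constant `⟨m|B|a⟩`, and passing from `η_B(a, m − a)` to `η_B(m − a, a)` costs
`⌊m|B|a⌋ - ⌊a|B|m⌋ = m ⬝ᵥ (L - Lᵀ) *ᵥ a`, the terms `⌊a|B|a⌋` cancelling. The two defects agree
because `B = L - Lᵀ` for skew-symmetric `B`.
-/

section StrictLower

variable {ι R : Type*}

/-- The strictly lower triangular part of a square matrix: the Gram matrix of `⌊·|B|·⌋`. -/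
def strictLower [LT ι] [DecidableLT ι] [Zero R] (B : Matrix ι ι R) : Matrix ι ι R :=
  of fun i j => if j < i then B i j else 0

theorem strictLower_apply [LT ι] [DecidableLT ι] [Zero R] (B : Matrix ι ι R) (i j : ι) :
    strictLower B i j = if j < i then B i j else 0 :=
  rfl

theorem strictLower_add [LT ι] [DecidableLT ι] [AddZeroClass R] (B C : Matrix ι ι R) :
    strictLower (B + C) = strictLower B + strictLower C := by
  ext i j
  by_cases h : j < i <;> simp [strictLower_apply, h]

theorem strictLower_sub_transpose [LinearOrder ι] [AddGroup R] [IsAddTorsionFree R]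
    {B : Matrix ι ι R} (hB : Bᵀ = -B) : strictLower B - (strictLower B)ᵀ = B := by
  ext i j
  have hskew : B j i = -B i j := congrFun₂ hB i j
  rcases lt_trichotomy i j with hij | rfl | hij
  · simp [strictLower_apply, hij, hij.not_gt, hskew]
  · simp [strictLower_apply, self_eq_neg.mp hskew]
  · simp [strictLower_apply, hij, hij.not_gt]

end StrictLower

section BilinearForm

variable {ι κ R : Type*} [Fintype ι] [Fintype κ]

theorem dotProduct_mulVec_sub_swap [NonUnitalCommRing R] (A : Matrix ι ι R) (v w : ι → R) :
    v ⬝ᵥ A *ᵥ w - w ⬝ᵥ A *ᵥ v = v ⬝ᵥ (A - Aᵀ) *ᵥ w := by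
  rw [sub_mulVec, dotProduct_sub, dotProduct_transpose_mulVec]

theorem intCast_dotProduct_mulVec [NonAssocRing R] (A : Matrix ι κ ℤ) (v : ι → ℤ) (w : κ → ℤ) :
    ((v ⬝ᵥ A *ᵥ w : ℤ) : R) =
      (fun i => (v i : R)) ⬝ᵥ A.map (Int.cast : ℤ → R) *ᵥ fun j => (w j : R) := by
  simp only [dotProduct, mulVec, map_apply, Int.cast_sum, Int.cast_mul]

end BilinearForm

section Bracket

variable {n : ℕ} (B C : Matrix (Fin n) (Fin n) ℤ)

theorem lbrak_eq_dotProduct (v w : Fin n → ℝ) :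
    lbrak B v w = v ⬝ᵥ (strictLower B).map (Int.cast : ℤ → ℝ) *ᵥ w := by
  simp only [lbrak, dotProduct, mulVec, Finset.mul_sum, map_apply, strictLower_apply]
  refine Finset.sum_congr rfl fun i _ => Finset.sum_congr rfl fun j _ => ?_
  split_ifs
  · ring
  · simp

theorem lbrak_add_left (u v w : Fin n → ℝ) : lbrak B (u + v) w = lbrak B u w + lbrak B v w := by
  simp only [lbrak_eq_dotProduct, add_dotProduct]

theorem lbrak_add_right (u v w : Fin n → ℝ) : lbrak B u (v + w) = lbrak B u v + lbrak B u w := by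
  simp only [lbrak_eq_dotProduct, mulVec_add, dotProduct_add]

theorem lbrak_add_matrix (v w : Fin n → ℝ) : lbrak (B + C) v w = lbrak B v w + lbrak C v w := by
  simp only [lbrak_eq_dotProduct, strictLower_add, Matrix.map_add _ Int.cast_add, add_mulVec,
    dotProduct_add]

theorem coe_lbrak_intCast (m m' : Fin n → ℤ) :
    ((lbrak B (fun i => (m i : ℝ)) (fun i => (m' i : ℝ)) : ℝ) : Torus) = 0 := by
  rw [lbrak_eq_dotProduct, ← intCast_dotProduct_mulVec, AddCircle.coe_eq_zero_iff]
  exact ⟨_, zsmul_one _⟩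

theorem lbrak_sub_swap {B : Matrix (Fin n) (Fin n) ℤ} (hB : Bᵀ = -B) (v w : Fin n → ℝ) :
    lbrak B v w - lbrak B w v = v ⬝ᵥ B.map (Int.cast : ℤ → ℝ) *ᵥ w := by
  rw [lbrak_eq_dotProduct, lbrak_eq_dotProduct, dotProduct_mulVec_sub_swap, ← transpose_map,
    ← Matrix.map_sub _ Int.cast_sub, strictLower_sub_transpose hB]

end Bracket

section TorusPairing

variable {n : ℕ} (B C : Matrix (Fin n) (Fin n) ℤ) (m : Fin n → ℤ)

theorem braB_sub (c d : Fin n → Torus) : braB B m (c - d) = braB B m c - braB B m d := by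
  simp only [braB, Pi.sub_apply, smul_sub, Finset.sum_sub_distrib]

theorem braB_add_matrix (c : Fin n → Torus) : braB (B + C) m c = braB B m c + braB C m c := by
  simp only [braB, Matrix.add_apply, add_mul, add_smul, Finset.sum_add_distrib]

theorem braB_coe (a : Fin n → ℝ) :
    braB B m (fun i => (a i : Torus)) =
      (((fun i => (m i : ℝ)) ⬝ᵥ B.map (Int.cast : ℤ → ℝ) *ᵥ a : ℝ) : Torus) := by
  have coe_sum (f : Fin n → ℝ) : ((∑ i, f i : ℝ) : Torus) = ∑ i, (f i : Torus) :=
    map_sum (QuotientAddGroup.mk' (AddSubgroup.zmultiples (1 : ℝ))) f Finset.univ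
  simp only [braB, dotProduct, mulVec, Finset.mul_sum, map_apply, coe_sum]
  refine Finset.sum_congr rfl fun i _ => Finset.sum_congr rfl fun j _ => ?_
  rw [← AddCircle.coe_zsmul, zsmul_eq_mul, Int.cast_mul, mul_left_comm, mul_assoc]

end TorusPairing

/-- The inclusion `𝕋 → H` of the constant maps, through which every `η_B` factors. -/
def constMap (n : ℕ) : Torus →+ TBH n :=
  (AddMonoidHom.inl _ _).comp (Pi.constAddMonoidHom _ _)

section CrossedIntertwiner

variable {n : ℕ} (B C : Matrix (Fin n) (Fin n) ℤ)

theorem ηB_eq_constMap (a a' : Fin n → ℝ) : ηB B a a' = constMap n (lbrak B a' a : ℝ) :=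
  rfl

theorem ηB_intCast (m m' : Fin n → ℤ) :
    ηB B (fun i => (m i : ℝ)) (fun i => (m' i : ℝ)) = 0 := by
  rw [ηB_eq_constMap, coe_lbrak_intCast, map_zero]

theorem ηB_add_left (a a' b : Fin n → ℝ) : ηB B (a + a') b = ηB B a b + ηB B a' b := by
  simp only [ηB_eq_constMap, lbrak_add_right, AddCircle.coe_add, map_add]

theorem ηB_add_right (a b b' : Fin n → ℝ) : ηB B a (b + b') = ηB B a b + ηB B a b' := by
  simp only [ηB_eq_constMap, lbrak_add_left, AddCircle.coe_add, map_add]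

theorem ηB_add_matrix (a a' : Fin n → ℝ) : ηB (B + C) a a' = ηB B a a' + ηB C a a' := by
  simp only [ηB_eq_constMap, lbrak_add_matrix, AddCircle.coe_add, map_add]

theorem ηB_cocycle (a a' a'' : Fin n → ℝ) :
    ηB B a a' + ηB B (a + a') a'' = ηB B a' a'' + ηB B a (a' + a'') := by
  rw [ηB_add_left, ηB_add_right]
  abel

theorem fB_fB (h : TBH n) : fB C (fB B h) = fB (B + C) h := by
  simp only [fB, braB_add_matrix, sub_sub]

theorem fB_TBα (a : Fin n → ℝ) (h : TBH n) :
    fB B (TBα a h) = TBα a (fB B h) - constMap n (braB B h.2 fun i => (a i : Torus)) := by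
  refine Prod.ext (funext fun c => ?_) (sub_zero h.2).symm
  change h.1 _ - braB B h.2 c = h.1 _ - braB B h.2 (c - _) - braB B h.2 _
  rw [braB_sub]
  abel

theorem ηB_sub_swap {B : Matrix (Fin n) (Fin n) ℤ} (hB : Bᵀ = -B) (a : Fin n → ℝ) (h : TBH n) :
    ηB B a (TBt h - a) - ηB B (TBt h - a) a =
      constMap n (braB B h.2 fun i => (a i : Torus)) := by
  have cancel_diagonal : lbrak B (TBt h - a) a - lbrak B a (TBt h - a) =
      lbrak B (TBt h) a - lbrak B a (TBt h) := by
    have hleft := lbrak_add_left B (TBt h - a) a a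
    have hright := lbrak_add_right B a (TBt h - a) a
    rw [sub_add_cancel] at hleft hright
    linarith
  rw [ηB_eq_constMap, ηB_eq_constMap, ← map_sub, ← AddCircle.coe_sub, cancel_diagonal,
    lbrak_sub_swap hB, braB_coe]
  rfl

theorem ηB_add_fB_TBα {B : Matrix (Fin n) (Fin n) ℤ} (hB : Bᵀ = -B) (a : Fin n → ℝ)
    (h : TBH n) :
    ηB B a (TBt h - a) + fB B (TBα a h) = ηB B (TBt h - a) a + TBα a (fB B h) := by
  rw [fB_TBα, ← ηB_sub_swap hB]
  abel

end CrossedIntertwiner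

theorem FB_crossed_intertwiner_action_general (n : ℕ) (B B₁ B₂ : Matrix (Fin n) (Fin n) ℤ) :
    (∀ m m' : Fin n → ℤ,
        ηB B (fun i => (m i : ℝ)) (fun i => (m' i : ℝ)) = 0) ∧
    (Bᵀ = -B → ∀ (τ : (Fin n → Torus) → Torus) (m : Fin n → ℤ) (a : Fin n → ℝ),
        ηB B a (TBt ((τ, m) : TBH n) - a) + fB B (TBα a (τ, m)) =
          ηB B (TBt ((τ, m) : TBH n) - a) a + TBα a (fB B (τ, m))) ∧
    (∀ a a' a'' : Fin n → ℝ,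
        ηB B a a' + ηB B (a + a') a'' = ηB B a' a'' + ηB B a (a' + a'')) ∧
    (∀ h : TBH n, fB B₂ (fB B₁ h) = fB (B₁ + B₂) h) ∧
    (∀ a a' : Fin n → ℝ, ηB B₂ a a' + ηB B₁ a a' = ηB (B₁ + B₂) a a') :=
  ⟨ηB_intCast B,
    fun hB τ m a => ηB_add_fB_TBα hB a (τ, m),
    ηB_cocycle B,
    fB_fB B₁ B₂,
    fun a a' => by rw [ηB_add_matrix, add_comm]⟩

/-- for every map `τ : 𝕋ⁿ → 𝕋` (in particular every smooth one), all
`m, m' ∈ ℤⁿ` and `a, a', a'' ∈ ℝⁿ`, the crossed-intertwiner axioms for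
`F_B = (id, f_B, η_B) : TBFFR[n] → TBFFR[n]` hold pointwise: (CI2)
`⌊m'|B|m⌋ ≡ 0 mod ℤ`; (CI4)
`η_B(a, m−a) + f_B(α(a,(τ,m))) = η_B(m−a, a) + α(a, f_B(τ,m))`; (CI5)
`η_B(a,a') + η_B(a+a',a'') = η_B(a',a'') + η_B(a, a'+a'')`. Moreover
`f_{B₂} ∘ f_{B₁} = f_{B₁+B₂}` and `η_{B₂} + η_{B₁} = η_{B₁+B₂}`, so
`F_{B₂} ∘ F_{B₁} = F_{B₁+B₂}` and `B ↦ F_B` is an action of `𝔰𝔬(n,ℤ)` on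
`TBFFR[n]` by crossed intertwiners. -/
theorem FB_crossed_intertwiner_action (n : ℕ) (hn : 1 ≤ n)
    (B B₁ B₂ : Matrix (Fin n) (Fin n) ℤ)
    (hB : Bᵀ = -B) (hB₁ : B₁ᵀ = -B₁) (hB₂ : B₂ᵀ = -B₂) :
    (∀ m m' : Fin n → ℤ,
        ηB B (fun i => (m i : ℝ)) (fun i => (m' i : ℝ)) = 0) ∧
    (∀ (τ : (Fin n → Torus) → Torus) (m : Fin n → ℤ) (a : Fin n → ℝ),
        ηB B a (TBt ((τ, m) : TBH n) - a) + fB B (TBα a (τ, m)) =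
          ηB B (TBt ((τ, m) : TBH n) - a) a + TBα a (fB B (τ, m))) ∧
    (∀ a a' a'' : Fin n → ℝ,
        ηB B a a' + ηB B (a + a') a'' = ηB B a' a'' + ηB B a (a' + a'')) ∧
    (∀ h : TBH n, fB B₂ (fB B₁ h) = fB (B₁ + B₂) h) ∧
    (∀ a a' : Fin n → ℝ, ηB B₂ a a' + ηB B₁ a a' = ηB (B₁ + B₂) a a') := by
  obtain ⟨ci2, ci4, ci5, f_comp, η_add⟩ := FB_crossed_intertwiner_action_general n B B₁ B₂
  exact ⟨ci2, ci4 hB, ci5, f_comp, η_add⟩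
end
end
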